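/- If K is a boundedly acyclic normal subgroup of G and G/K is boundedly acyclic, then G is boundedly acyclic. -/

import Mathlib

/-- A real-valued function is bounded. -/
def IsBddFun {α : Type*} (f : α → ℝ) : Prop := ∃ C : ℝ, ∀ x, |f x| ≤ C

/-- A homogeneous cochain is `G`-invariant. -/
def IsInvCochain {G : Type*} [Group G] {n : ℕ} (c : (Fin n → G) → ℝ) : Prop :=
  ∀ (g : G) (x : Fin n → G), c (fun i => g * x i) = c x

/-- The simplicial coboundary on homogeneous cochains. -/
noncomputable def gcoboundary {G : Type*} [Group G] {n : ℕ}
    (c : (Fin n → G) → ℝ) : (Fin (n + 1) → G) → ℝ :=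
  fun x => ∑ i : Fin (n + 1), (-1 : ℝ) ^ (i : ℕ) * c (x ∘ i.succAbove)

/-- Vanishing of `H^q_b(G;ℝ)` (`q ≥ 1`). -/
def HbVanishAt (G : Type*) [Group G] (q : ℕ) : Prop :=
  ∀ c : (Fin (q + 1) → G) → ℝ, IsInvCochain c → IsBddFun c → gcoboundary c = 0 →
    ∃ b : (Fin q → G) → ℝ, IsInvCochain b ∧ IsBddFun b ∧ gcoboundary b = c

/-!
Consider the double complex of bounded `G`-invariant functions on `(G ⧸ K)ᵖ × Gⁿ`. Its row `n = 0`
and its column `p = 0` are the augmented complexes computing the bounded cohomology of `G ⧸ K` and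
of `G`, so by a diagram chase it suffices that all other rows and columns are exact.

The rows with `n ≥ 1` are contracted by prepending the coset of the first coordinate in `Gⁿ`. Over
each point of `(G ⧸ K)ᵖ`, `p ≥ 1`, a column is the complex of bounded `K`-invariant functions on
powers of `G`. By the open mapping theorem its exactness comes with a bound on the norms of
primitives, so primitives chosen fibre by fibre form a bounded function.

The complex of bounded `K`-invariant functions on powers of `G` is exact in the same degrees as the
one on powers of `K`, by the same chase in the double complex of `Kᵖ × Gⁿ`.
-/

open scoped ENNReal
open Function (Exact Injective)

namespace BoundedCohomology

theorem exists_norm_preimage_le_of_exact {𝕜 E F H : Type*} [NontriviallyNormedField 𝕜]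
    [NormedAddCommGroup E] [NormedSpace 𝕜 E] [CompleteSpace E]
    [NormedAddCommGroup F] [NormedSpace 𝕜 F] [CompleteSpace F]
    [NormedAddCommGroup H] [NormedSpace 𝕜 H]
    {f : E →L[𝕜] F} {g : F →L[𝕜] H} (hfg : Exact f g) :
    ∃ M > 0, ∀ y, g y = 0 → ∃ x, f x = y ∧ ‖x‖ ≤ M * ‖y‖ := by
  have : CompleteSpace g.ker := g.isClosed_ker.completeSpace_coe
  let f' : E →L[𝕜] g.ker := f.codRestrict _ hfg.apply_apply_eq_zero
  have hf' : Function.Surjective f' := fun ⟨y, hy⟩ =>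
    let ⟨x, hx⟩ := (hfg y).1 hy
    ⟨x, Subtype.ext hx⟩
  obtain ⟨M, hM, hpre⟩ := f'.exists_preimage_norm_le hf'
  refine ⟨M, hM, fun y hy => ?_⟩
  obtain ⟨x, hx, hxy⟩ := hpre ⟨y, hy⟩
  exact ⟨x, congrArg Subtype.val hx, hxy⟩

section DoubleComplex

variable {R : Type*} [Semiring R] {A : ℕ → ℕ → Type*} [∀ p n, AddCommGroup (A p n)]
  [∀ p n, Module R (A p n)] {d : ∀ p n, A p n →ₗ[R] A p (n + 1)}
  {δ : ∀ p n, A p n →ₗ[R] A (p + 1) n} {m : ℕ}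

theorem exists_d_δ_eq_d (comm : ∀ p n a, δ p (n + 1) (d p n a) = d (p + 1) n (δ p n a))
    (hd : ∀ p, Injective (d p 0))
    (hcol : ∀ p, ∀ n ≤ m, Exact (d (p + 1) n) (d (p + 1) (n + 1)))
    (hrow : ∀ n, ∀ p ≤ m, Exact (δ p (n + 1)) (δ (p + 1) (n + 1)))
    (hrow₀ : Exact (δ m 0) (δ (m + 1) 0)) {p n : ℕ} (hpn : p + n = m) (a : A (p + 1) n)
    (ha : d (p + 2) n (δ (p + 1) n a) = 0) :
    ∃ b, d (p + 1) n (δ p n b) = d (p + 1) n a := by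
  induction n generalizing p with
  | zero =>
    subst hpn
    have hδa : δ (p + 1) 0 a = 0 := hd (p + 2) (by rw [ha, map_zero])
    obtain ⟨b, rfl⟩ := (hrow₀ a).1 hδa
    exact ⟨b, rfl⟩
  | succ n ih =>
    obtain ⟨a', ha'⟩ := (hcol (p + 1) n (by lia) _).1 ha
    have hδa' : d (p + 3) n (δ (p + 2) n a') = 0 := by
      rw [← comm, ha', (hrow n (p + 1) (by lia)).apply_apply_eq_zero]
    obtain ⟨b', hb'⟩ := ih (by lia) a' hδa'
    have hdiff : δ (p + 1) (n + 1) (a - d (p + 1) n b') = 0 := by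
      rw [map_sub, comm, hb', ha', sub_self]
    obtain ⟨b, hb⟩ := (hrow n p (by lia) _).1 hdiff
    have hdd : d (p + 1) (n + 1) (d (p + 1) n b') = 0 :=
      (hcol p n (by lia)).apply_apply_eq_zero b'
    exact ⟨b, by rw [hb, map_sub, hdd, sub_zero]⟩

theorem exact_column_of_exact_row
    (comm : ∀ p n a, δ p (n + 1) (d p n a) = d (p + 1) n (δ p n a))
    (hd : ∀ p, Injective (d p 0)) (hδ : ∀ n, Injective (δ 0 n))
    (hcol : ∀ p, ∀ n ≤ m, Exact (d (p + 1) n) (d (p + 1) (n + 1)))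
    (hrow : ∀ n, ∀ p ≤ m, Exact (δ p (n + 1)) (δ (p + 1) (n + 1)))
    (hrow₀ : Exact (δ m 0) (δ (m + 1) 0)) : Exact (d 0 m) (d 0 (m + 1)) := by
  refine fun c => ⟨fun hc => ?_, ?_⟩
  · have hdδc : d 1 (m + 1) (δ 0 (m + 1) c) = 0 := by rw [← comm, hc, map_zero]
    obtain ⟨a, ha⟩ := (hcol 0 m le_rfl _).1 hdδc
    have hδa : d 2 m (δ 1 m a) = 0 := by rw [← comm, ha, (hrow m 0 m.zero_le).apply_apply_eq_zero]
    obtain ⟨b, hb⟩ := exists_d_δ_eq_d comm hd hcol hrow hrow₀ (zero_add m) a hδa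
    exact ⟨b, hδ (m + 1) (by rw [comm, hb, ha])⟩
  · rintro ⟨b, rfl⟩
    apply hδ
    rw [comm, comm, (hcol 0 m le_rfl).apply_apply_eq_zero, map_zero]

end DoubleComplex

section SimplicialCoboundary

variable {S : Type*} {n : ℕ}

/-- The homogeneous simplicial coboundary on real functions of tuples in a set `S`. It agrees with
`gcoboundary` when `S` is a group, and is also needed for sets with a group action. -/
noncomputable def simplicialCoboundary (S : Type*) (n : ℕ) :
    ((Fin n → S) → ℝ) →ₗ[ℝ] (Fin (n + 1) → S) → ℝ :=
  ∑ i : Fin (n + 1), (-1 : ℝ) ^ (i : ℕ) • LinearMap.funLeft ℝ ℝ (· ∘ i.succAbove)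

theorem simplicialCoboundary_apply (c : (Fin n → S) → ℝ) (x : Fin (n + 1) → S) :
    simplicialCoboundary S n c x =
      ∑ i : Fin (n + 1), (-1 : ℝ) ^ (i : ℕ) * c (x ∘ i.succAbove) := by
  simp [simplicialCoboundary, LinearMap.sum_apply, Finset.sum_apply]

theorem simplicialCoboundary_eq_gcoboundary {G : Type*} [Group G] (c : (Fin n → G) → ℝ) :
    simplicialCoboundary G n c = gcoboundary c :=
  funext (simplicialCoboundary_apply c)

theorem simplicialCoboundary_comm {T : Type*} {p : ℕ} (F : (Fin p → S) → (Fin n → T) → ℝ)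
    (y : Fin (p + 1) → S) (x : Fin (n + 1) → T) :
    simplicialCoboundary S p (fun y' => simplicialCoboundary T n (F y') x) y =
      simplicialCoboundary T n (fun x' => simplicialCoboundary S p (F · x') y) x := by
  simp only [simplicialCoboundary_apply, Finset.mul_sum]
  rw [Finset.sum_comm]
  exact Finset.sum_congr rfl fun i _ => Finset.sum_congr rfl fun j _ => mul_left_comm _ _ _

theorem simplicialCoboundary_comp {T : Type*} (φ : S → T) (c : (Fin n → T) → ℝ)
    (x : Fin (n + 1) → S) :
    simplicialCoboundary S n (fun y => c (φ ∘ y)) x = simplicialCoboundary T n c (φ ∘ x) := by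
  simp only [simplicialCoboundary_apply, Function.comp_assoc]

theorem abs_simplicialCoboundary_le {c : (Fin n → S) → ℝ} {C : ℝ} (hc : ∀ x, |c x| ≤ C)
    (x : Fin (n + 1) → S) : |simplicialCoboundary S n c x| ≤ (n + 1) * C := by
  rw [simplicialCoboundary_apply]
  calc |∑ i : Fin (n + 1), (-1 : ℝ) ^ (i : ℕ) * c (x ∘ i.succAbove)|
      ≤ ∑ i : Fin (n + 1), |(-1 : ℝ) ^ (i : ℕ) * c (x ∘ i.succAbove)| :=
        Finset.abs_sum_le_sum_abs _ _
    _ ≤ ∑ _i : Fin (n + 1), C :=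
        Finset.sum_le_sum fun i _ => by simpa [abs_mul] using hc (x ∘ i.succAbove)
    _ = (n + 1) * C := by simp

theorem simplicialCoboundary_zero_apply (c : (Fin 0 → S) → ℝ) (x : Fin 1 → S) (z : Fin 0 → S) :
    simplicialCoboundary S 0 c x = c z := by
  simp [simplicialCoboundary_apply, Subsingleton.elim _ z]

theorem simplicialCoboundary_cons (c : (Fin (n + 1) → S) → ℝ) (a : S) (x : Fin (n + 1) → S) :
    simplicialCoboundary S (n + 1) c (Fin.cons a x : Fin (n + 2) → S) =
      c x - simplicialCoboundary S n (fun z => c (Fin.cons a z : Fin (n + 1) → S)) x := by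
  have face_succ (i : Fin (n + 1)) : (Fin.cons a x : Fin (n + 2) → S) ∘ i.succ.succAbove =
      (Fin.cons a (x ∘ i.succAbove) : Fin (n + 1) → S) := by
    funext j
    cases j using Fin.cases <;> simp
  have face_zero : (Fin.cons a x : Fin (n + 2) → S) ∘ (0 : Fin (n + 2)).succAbove = x := by
    funext j
    simp
  simp only [simplicialCoboundary_apply, Fin.sum_univ_succ (n := n + 1), face_succ, face_zero,
    Fin.val_zero, Fin.val_succ, pow_zero, one_mul, pow_succ, mul_neg_one, neg_mul,
    Finset.sum_neg_distrib, sub_eq_add_neg]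

theorem simplicialCoboundary_simplicialCoboundary (c : (Fin n → S) → ℝ) :
    simplicialCoboundary S (n + 1) (simplicialCoboundary S n c) = 0 := by
  induction n with
  | zero =>
    funext x
    rw [← Fin.cons_self_tail x, simplicialCoboundary_cons,
      simplicialCoboundary_zero_apply c _ Fin.elim0,
      simplicialCoboundary_zero_apply _ _ Fin.elim0,
      simplicialCoboundary_zero_apply c _ Fin.elim0, sub_self, Pi.zero_apply]
  | succ n ih =>
    funext x
    have restrict_cons : (fun z => simplicialCoboundary S (n + 1) c
        (Fin.cons (x 0) z : Fin (n + 2) → S)) =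
          c - simplicialCoboundary S n (fun z => c (Fin.cons (x 0) z : Fin (n + 1) → S)) :=
      funext (simplicialCoboundary_cons c (x 0))
    rw [← Fin.cons_self_tail x, simplicialCoboundary_cons, restrict_cons, map_sub, ih, sub_zero,
      sub_self, Pi.zero_apply]

end SimplicialCoboundary

section BoundedInvariants

variable {Γ X Y : Type*} [SMul Γ X] [SMul Γ Y]

/-- The Banach space `ℓ^∞(X)^Γ` of bounded `Γ`-invariant real functions on a set `X`. -/
def boundedInvariants (Γ X : Type*) [SMul Γ X] : Submodule ℝ (lp (fun _ : X => ℝ) ∞) where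
  carrier := {f | ∀ (g : Γ) (x : X), f (g • x) = f x}
  zero_mem' _ _ := rfl
  add_mem' hf hf' g x := congrArg₂ (· + ·) (hf g x) (hf' g x)
  smul_mem' a _ hf g x := congrArg (a * ·) (hf g x)

namespace boundedInvariants

instance : CoeFun (boundedInvariants Γ X) fun _ => X → ℝ := ⟨fun f => f.1⟩

theorem apply_smul (f : boundedInvariants Γ X) (g : Γ) (x : X) : f (g • x) = f x := f.2 g x

theorem apply_mk_smul (f : boundedInvariants Γ (X × Y)) {g : Γ} {x : X} (hx : g • x = x) (y : Y) :
    f (x, g • y) = f (x, y) := by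
  simpa only [Prod.smul_mk, hx] using apply_smul f g (x, y)

theorem abs_apply_le_norm (f : boundedInvariants Γ X) (x : X) : |f x| ≤ ‖f‖ :=
  lp.norm_apply_le_norm ENNReal.top_ne_zero f.1 x

theorem norm_le {f : boundedInvariants Γ X} {C : ℝ} (hC : 0 ≤ C) (hf : ∀ x, |f x| ≤ C) :
    ‖f‖ ≤ C :=
  lp.norm_le_of_forall_le hC hf

@[ext]
protected theorem ext {f f' : boundedInvariants Γ X} (h : ∀ x, f x = f' x) : f = f' :=
  Subtype.ext (lp.ext (funext h))

instance : CompleteSpace (boundedInvariants Γ X) := by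
  have : IsClosed (boundedInvariants Γ X : Set (lp (fun _ : X => ℝ) ∞)) := by
    have eval_continuous (x : X) : Continuous fun f : lp (fun _ : X => ℝ) ∞ => f x :=
      (lp.evalCLM ℝ (fun _ : X => ℝ) ∞ x).continuous
    have : (boundedInvariants Γ X : Set (lp (fun _ : X => ℝ) ∞)) =
        ⋂ (g : Γ) (x : X), {f | f (g • x) = f x} := by
      ext f
      simp only [Set.mem_iInter]
      rfl
    rw [this]
    exact isClosed_iInter fun g => isClosed_iInter fun x =>
      isClosed_eq (eval_continuous _) (eval_continuous _)
  exact this.completeSpace_coe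

/-- The element of `ℓ^∞(X)^Γ` given by a bounded invariant function. -/
def ofFun (c : X → ℝ) (hinv : ∀ (g : Γ) x, c (g • x) = c x) (hbdd : IsBddFun c) :
    boundedInvariants Γ X :=
  ⟨⟨c, memℓp_infty (hbdd.imp fun _ hC => Set.forall_mem_range.2 hC)⟩, hinv⟩

/-- Composition with an equivariant map, as an operator `ℓ^∞(Y)^Γ → ℓ^∞(X)^Γ`. -/
def pullback (φ : X →[Γ] Y) : boundedInvariants Γ Y →ₗ[ℝ] boundedInvariants Γ X where
  toFun f := ofFun (f ∘ φ) (fun g x => by simp [apply_smul]) ⟨‖f‖, fun _ => abs_apply_le_norm f _⟩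
  map_add' _ _ := rfl
  map_smul' _ _ := rfl

/-- The exchange of factors, as an isomorphism `ℓ^∞(X × Y)^Γ ≃ ℓ^∞(Y × X)^Γ`. -/
noncomputable def swapEquiv (Γ X Y : Type*) [SMul Γ X] [SMul Γ Y] :
    boundedInvariants Γ (X × Y) ≃ₗ[ℝ] boundedInvariants Γ (Y × X) where
  __ := pullback ⟨Prod.swap, fun _ _ => rfl⟩
  invFun := pullback ⟨Prod.swap, fun _ _ => rfl⟩
  left_inv _ := rfl
  right_inv _ := rfl

end boundedInvariants

end BoundedInvariants

section Coboundary

open boundedInvariants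

variable {Γ S T Z : Type*} [SMul Γ S] [SMul Γ T] [SMul Γ Z]

/-- The coboundary of bounded `Γ`-invariant cochains on `S` with coefficients in `ℓ^∞(Z)`; such a
cochain is encoded as a function on `Z × Sⁿ`. -/
noncomputable def coboundary (Γ S Z : Type*) [SMul Γ S] [SMul Γ Z] (n : ℕ) :
    boundedInvariants Γ (Z × (Fin n → S)) →L[ℝ] boundedInvariants Γ (Z × (Fin (n + 1) → S)) :=
  LinearMap.mkContinuous
    { toFun f := ofFun (fun zx => simplicialCoboundary S n (fun y => f (zx.1, y)) zx.2)
        (fun g zx => by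
          have hf : (fun y => f (zx.1, y)) = fun y => f (g • zx.1, g • y) :=
            funext fun y => (apply_smul f g (zx.1, y)).symm
          rw [hf]
          exact (simplicialCoboundary_comp (g • ·) (fun y => f (g • zx.1, y)) zx.2).symm)
        ⟨_, fun zx => abs_simplicialCoboundary_le (fun _ => abs_apply_le_norm f _) zx.2⟩
      map_add' f f' := boundedInvariants.ext fun zx =>
        congrFun (map_add (simplicialCoboundary S n) (fun y => f (zx.1, y)) _) zx.2
      map_smul' a f := boundedInvariants.ext fun zx =>
        congrFun (map_smul (simplicialCoboundary S n) a (fun y => f (zx.1, y))) zx.2 }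
    (n + 1) fun f => norm_le (by positivity) fun zx =>
      abs_simplicialCoboundary_le (fun _ => abs_apply_le_norm f _) zx.2

theorem coboundary_apply {n : ℕ} (f : boundedInvariants Γ (Z × (Fin n → S))) (z : Z)
    (x : Fin (n + 1) → S) :
    coboundary Γ S Z n f (z, x) = simplicialCoboundary S n (fun y => f (z, y)) x := rfl

theorem coboundary_coboundary {n : ℕ} (f : boundedInvariants Γ (Z × (Fin n → S))) :
    coboundary Γ S Z (n + 1) (coboundary Γ S Z n f) = 0 := by
  refine boundedInvariants.ext fun ⟨z, x⟩ => ?_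
  simp only [coboundary_apply, simplicialCoboundary_simplicialCoboundary]
  rfl

theorem coboundary_zero_injective [Nonempty S] : Injective (coboundary Γ S Z 0) := by
  intro f f' h
  refine boundedInvariants.ext fun ⟨z, x⟩ => ?_
  have := boundedInvariants.ext_iff.1 h (z, fun _ => Classical.arbitrary S)
  simpa only [coboundary_apply, simplicialCoboundary_zero_apply _ _ x] using this

/-- Prepending `φ z` to a tuple `x` with coefficient `z`. -/
def consHom (φ : Z →[Γ] S) (n : ℕ) : Z × (Fin n → S) →[Γ] Z × (Fin (n + 1) → S) where
  toFun zx := (zx.1, Fin.cons (φ zx.1) zx.2)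
  map_smul' g zx := by
    refine Prod.ext rfl (funext fun j => ?_)
    cases j using Fin.cases <;> simp

theorem exact_coboundary_of_equivariant (φ : Z →[Γ] S) (n : ℕ) :
    Exact (coboundary Γ S Z n) (coboundary Γ S Z (n + 1)) := by
  refine fun f => ⟨fun hf => ⟨pullback (consHom φ n) f, boundedInvariants.ext fun ⟨z, x⟩ => ?_⟩, ?_⟩
  · have := boundedInvariants.ext_iff.1 hf (z, (Fin.cons (φ z) x : Fin (n + 2) → S))
    simp only [coboundary_apply, simplicialCoboundary_cons] at this
    rw [coboundary_apply]
    exact (sub_eq_zero.1 this).symm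
  · rintro ⟨f, rfl⟩
    exact coboundary_coboundary f

/-- The coboundary `coboundary Γ S Z` with the two factors of `Z × Sᵖ` exchanged. -/
noncomputable def coboundaryLeft (Γ S Z : Type*) [SMul Γ S] [SMul Γ Z] (p : ℕ) :
    boundedInvariants Γ ((Fin p → S) × Z) →ₗ[ℝ] boundedInvariants Γ ((Fin (p + 1) → S) × Z) :=
  swapEquiv Γ Z (Fin (p + 1) → S) ∘ₗ (coboundary Γ S Z p).toLinearMap ∘ₗ
    swapEquiv Γ (Fin p → S) Z

theorem coboundaryLeft_coboundary {p n : ℕ}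
    (f : boundedInvariants Γ ((Fin p → S) × (Fin n → T))) :
    coboundaryLeft Γ S (Fin (n + 1) → T) p (coboundary Γ T (Fin p → S) n f) =
      coboundary Γ T (Fin (p + 1) → S) n (coboundaryLeft Γ S (Fin n → T) p f) :=
  boundedInvariants.ext fun ⟨y, x⟩ => simplicialCoboundary_comm (fun y' x' => f (y', x')) y x

theorem coboundaryLeft_zero_injective [Nonempty S] : Injective (coboundaryLeft Γ S Z 0) :=
  (swapEquiv Γ _ _).injective.comp
    (coboundary_zero_injective.comp (swapEquiv Γ _ _).injective)

theorem exact_coboundaryLeft_iff {p : ℕ} :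
    Exact (coboundaryLeft Γ S Z p) (coboundaryLeft Γ S Z (p + 1)) ↔
      Exact (coboundary Γ S Z p) (coboundary Γ S Z (p + 1)) :=
  Exact.iff_of_ladder_linearEquiv
    (f₁₂ := (coboundary Γ S Z p).toLinearMap) (f₂₃ := (coboundary Γ S Z (p + 1)).toLinearMap)
    (e₁ := swapEquiv Γ Z (Fin p → S)) (e₂ := swapEquiv Γ Z (Fin (p + 1) → S))
    (e₃ := swapEquiv Γ Z (Fin (p + 2) → S)) rfl rfl

end Coboundary

section Resolutions

open boundedInvariants

variable {Γ S T : Type*} [SMul Γ S] [SMul Γ T] {m : ℕ}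

/-- Exactness in degree `q` of the complex `ℓ^∞(S^{•+1})^Γ` of bounded invariant cochains on a
`Γ`-set `S`, augmented by the constants. For `S = Γ` this is `HbVanishAt Γ q`. -/
def BoundedlyExactAt (Γ S : Type*) [SMul Γ S] (q : ℕ) : Prop :=
  ∀ c : (Fin (q + 1) → S) → ℝ, (∀ (g : Γ) x, c (g • x) = c x) → IsBddFun c →
    simplicialCoboundary S (q + 1) c = 0 →
    ∃ b : (Fin q → S) → ℝ, (∀ (g : Γ) x, b (g • x) = b x) ∧ IsBddFun b ∧
      simplicialCoboundary S q b = c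

theorem hbVanishAt_iff_boundedlyExactAt {G : Type*} [Group G] {q : ℕ} :
    HbVanishAt G q ↔ BoundedlyExactAt G G q := by
  simp only [HbVanishAt, BoundedlyExactAt, simplicialCoboundary_eq_gcoboundary]
  rfl

theorem hbVanishAt_quotient_iff_boundedlyExactAt {G : Type*} [Group G] (K : Subgroup G)
    [K.Normal] {q : ℕ} : HbVanishAt (G ⧸ K) q ↔ BoundedlyExactAt G (G ⧸ K) q := by
  have mk_smul {n : ℕ} (g : G) (x : Fin n → G ⧸ K) : (g : G ⧸ K) • x = g • x :=
    funext fun i => (x i).induction_on fun _ => rfl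
  simp only [hbVanishAt_iff_boundedlyExactAt, BoundedlyExactAt,
    (QuotientGroup.mk_surjective (s := K)).forall, mk_smul]

theorem boundedlyExactAt_zero [Nonempty S] : BoundedlyExactAt Γ S 0 := by
  intro c _ ⟨C, hC⟩ hc
  let s : Fin 1 → S := fun _ => Classical.arbitrary S
  have const (x : Fin 1 → S) : c s = c x := by
    have := congrFun hc (Fin.cons (x 0) s : Fin 2 → S)
    rw [simplicialCoboundary_cons, simplicialCoboundary_zero_apply _ _ Fin.elim0] at this
    have cons_eq : (Fin.cons (x 0) Fin.elim0 : Fin 1 → S) = x :=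
      funext fun i => by rw [Fin.fin_one_eq_zero i, Fin.cons_zero]
    rw [cons_eq] at this
    exact sub_eq_zero.1 this
  exact ⟨fun _ => c s, fun _ _ => rfl, ⟨C, fun _ => hC s⟩, funext fun x =>
    (simplicialCoboundary_zero_apply _ x Fin.elim0).trans (const x)⟩

theorem boundedlyExactAt_iff_exact (Z : Type*) [SMul Γ Z] [Unique Z] :
    BoundedlyExactAt Γ S m ↔ Exact (coboundary Γ S Z m) (coboundary Γ S Z (m + 1)) := by
  constructor
  · refine fun h f => ⟨fun hf => ?_, ?_⟩
    · obtain ⟨b, hb, hbC, hbf⟩ := h (fun x => f (default, x))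
        (fun g x => apply_mk_smul f (Subsingleton.elim _ _) x)
        ⟨‖f‖, fun x => abs_apply_le_norm f _⟩
        (funext fun x => boundedInvariants.ext_iff.1 hf (default, x))
      refine ⟨ofFun (fun zx => b zx.2) (fun g zx => hb g zx.2) (hbC.imp fun _ h zx => h zx.2),
        boundedInvariants.ext fun ⟨z, x⟩ => ?_⟩
      rw [Unique.eq_default z]
      exact congrFun hbf x
    · rintro ⟨b, rfl⟩
      exact coboundary_coboundary b
  · intro h c hinv hbdd hc
    let f : boundedInvariants Γ (Z × (Fin (m + 1) → S)) :=
      ofFun (fun zx => c zx.2) (fun g zx => hinv g zx.2) (hbdd.imp fun _ h zx => h zx.2)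
    obtain ⟨b, hb⟩ := (h f).1 (boundedInvariants.ext fun zx => congrFun hc zx.2)
    exact ⟨fun x => b (default, x), fun g x => apply_mk_smul b (Subsingleton.elim _ _) x,
      ⟨‖b‖, fun _ => abs_apply_le_norm b _⟩,
      funext fun x => boundedInvariants.ext_iff.1 hb (default, x)⟩

theorem BoundedlyExactAt.of_exact [Nonempty S] [Nonempty T]
    (hT : ∀ p, ∀ n ≤ m, Exact (coboundary Γ T (Fin (p + 1) → S) n)
      (coboundary Γ T (Fin (p + 1) → S) (n + 1)))
    (hS : ∀ n, ∀ p ≤ m, Exact (coboundary Γ S (Fin (n + 1) → T) p)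
      (coboundary Γ S (Fin (n + 1) → T) (p + 1)))
    (h : BoundedlyExactAt Γ S m) : BoundedlyExactAt Γ T m :=
  (boundedlyExactAt_iff_exact (Fin 0 → S)).2 <|
    exact_column_of_exact_row
      (A := fun p n => boundedInvariants Γ ((Fin p → S) × (Fin n → T)))
      (d := fun p n => (coboundary Γ T (Fin p → S) n).toLinearMap)
      (δ := fun p n => coboundaryLeft Γ S (Fin n → T) p)
      (fun _ _ f => coboundaryLeft_coboundary f) (fun _ => coboundary_zero_injective)
      (fun _ => coboundaryLeft_zero_injective) hT
      (fun n p hp => exact_coboundaryLeft_iff.2 (hS n p hp))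
      (exact_coboundaryLeft_iff.2 ((boundedlyExactAt_iff_exact (Fin 0 → T)).1 h))

/-- The first coordinate of a nonempty tuple, as an equivariant map. -/
def headHom (Γ S : Type*) [SMul Γ S] (n : ℕ) : (Fin (n + 1) → S) →[Γ] S where
  toFun x := x 0
  map_smul' _ _ := rfl

theorem BoundedlyExactAt.of_equivariant [Nonempty S] (φ : S →[Γ] T) (ψ : T →[Γ] S)
    (h : BoundedlyExactAt Γ S m) : BoundedlyExactAt Γ T m :=
  have : Nonempty T := .map φ ‹_›
  h.of_exact (fun p n _ => exact_coboundary_of_equivariant (φ.comp (headHom Γ S p)) n)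
    fun n p _ => exact_coboundary_of_equivariant (ψ.comp (headHom Γ T n)) p

theorem BoundedlyExactAt.exists_bound (h : BoundedlyExactAt Γ S m) :
    ∃ M : ℝ, ∀ (C : ℝ) (c : (Fin (m + 1) → S) → ℝ), 0 ≤ C → (∀ (g : Γ) x, c (g • x) = c x) →
      (∀ x, |c x| ≤ C) → simplicialCoboundary S (m + 1) c = 0 →
      ∃ b : (Fin m → S) → ℝ, (∀ (g : Γ) x, b (g • x) = b x) ∧ (∀ x, |b x| ≤ M * C) ∧
        simplicialCoboundary S m b = c := by
  obtain ⟨M, hM, hpre⟩ :=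
    exists_norm_preimage_le_of_exact ((boundedlyExactAt_iff_exact (Γ := Γ) Unit).1 h)
  refine ⟨M, fun C c hC hinv hbdd hc => ?_⟩
  let f : boundedInvariants Γ (Unit × (Fin (m + 1) → S)) :=
    ofFun (fun zx => c zx.2) (fun g zx => hinv g zx.2) ⟨C, fun zx => hbdd zx.2⟩
  have hf : ‖f‖ ≤ C := norm_le hC fun zx => hbdd zx.2
  obtain ⟨b, hb, hbf⟩ := hpre f (boundedInvariants.ext fun zx => congrFun hc zx.2)
  refine ⟨fun x => b (default, x), fun g x => apply_mk_smul b rfl x, fun x => ?_,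
    funext fun x => boundedInvariants.ext_iff.1 hb (default, x)⟩
  calc |b (default, x)| ≤ ‖b‖ := abs_apply_le_norm b _
    _ ≤ M * ‖f‖ := hbf
    _ ≤ M * C := by gcongr

end Resolutions

section Subgroup

open boundedInvariants

variable {G : Type*} [Group G] (K : Subgroup G)

theorem nonempty_equivariant_subgroup : Nonempty (G →[K] K) := by
  obtain ⟨T, hT, -⟩ := K.exists_isComplement_right 1
  exact ⟨⟨fun g => (hT.equiv g).1, fun k g => congrArg Prod.fst (hT.equiv_mul_left k g)⟩⟩

variable {K}

theorem inv_out_mul_mul_out_mem (g : G) (q : G ⧸ K) : (g • q).out⁻¹ * (g * q.out) ∈ K := by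
  rw [← QuotientGroup.eq, QuotientGroup.out_eq', ← smul_eq_mul, ← MulAction.Quotient.smul_mk,
    QuotientGroup.out_eq']

theorem smul_quotient_eq_self [K.Normal] (k : K) (q : G ⧸ K) : k • q = q := by
  induction q using QuotientGroup.induction_on with | H g =>
  refine QuotientGroup.eq.2 ?_
  simpa [Subgroup.smul_def, mul_assoc] using ‹K.Normal›.conj_mem' k⁻¹ (K.inv_mem k.2) g

theorem exact_coboundary_of_boundedlyExactAt_subgroup {T Y : Type*} [MulAction G T] [MulAction G Y]
    {n : ℕ} (hK : BoundedlyExactAt K T n) (π : Y →[G] G ⧸ K)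
    (hY : ∀ (k : K) (y : Y), k • y = y) :
    Exact (coboundary G T Y n) (coboundary G T Y (n + 1)) := by
  refine fun f => ⟨fun hf => ?_, ?_⟩
  · obtain ⟨M, hM⟩ := hK.exists_bound
    have fiberwise (y : Y) := hM ‖f‖ (fun x => f (y, x)) (norm_nonneg f)
      (fun k x => apply_mk_smul f (hY k y) x)
      (fun x => abs_apply_le_norm f (y, x))
      (funext fun x => boundedInvariants.ext_iff.1 hf (y, x))
    choose b hb_inv hb_le hb using fiberwise
    -- Reading the primitives off at coset representatives makes them `G`-equivariant: `G` moves the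
    -- representatives only by elements of `K`, under which the primitives are invariant.
    let s (y : Y) : G := (π y).out
    have translate (g : G) (y : Y) :
        ∃ k : K, (s (g • y))⁻¹ • g • y = (s y)⁻¹ • y ∧
          ∀ x : Fin n → T, (s (g • y))⁻¹ • g • x = k • (s y)⁻¹ • x := by
      let k : K := ⟨(s (g • y))⁻¹ * (g * s y), by
        simpa only [s, map_smul] using inv_out_mul_mul_out_mem g (π y)⟩
      refine ⟨k, ?_, fun x => ?_⟩
      · rw [← hY k ((s y)⁻¹ • y)]
        simp [k, Subgroup.smul_def, smul_smul, mul_assoc]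
      · simp [k, Subgroup.smul_def, smul_smul, mul_assoc]
    refine ⟨ofFun (fun yx => b ((s yx.1)⁻¹ • yx.1) ((s yx.1)⁻¹ • yx.2)) (fun g yx => ?_)
      ⟨M * ‖f‖, fun yx => hb_le _ _⟩, boundedInvariants.ext fun ⟨y, x⟩ => ?_⟩
    · obtain ⟨k, hy, hx⟩ := translate g yx.1
      rw [Prod.smul_fst, Prod.smul_snd, hy, hx, hb_inv]
    · calc simplicialCoboundary T n (fun x' => b ((s y)⁻¹ • y) ((s y)⁻¹ • x')) x
          = simplicialCoboundary T n (b ((s y)⁻¹ • y)) ((s y)⁻¹ • x) :=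
            simplicialCoboundary_comp ((s y)⁻¹ • ·) _ x
        _ = f ((s y)⁻¹ • (y, x)) := congrFun (hb _) _
        _ = f (y, x) := apply_smul f _ _
  · rintro ⟨b, rfl⟩
    exact coboundary_coboundary b

end Subgroup

end BoundedCohomology

open BoundedCohomology

theorem extension_boundedly_acyclic_general {G : Type*} [Group G] (K : Subgroup G) [K.Normal]
    {n : ℕ} (hK : ∀ q, 0 < q → q ≤ n → HbVanishAt K q) :
    HbVanishAt G n ↔ HbVanishAt (G ⧸ K) n := by
  obtain ⟨ρ⟩ := nonempty_equivariant_subgroup K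
  have hKG (q : ℕ) (hq : q ≤ n) : BoundedlyExactAt K G q := by
    rcases q.eq_zero_or_pos with rfl | hq'
    · exact boundedlyExactAt_zero
    · exact (hbVanishAt_iff_boundedlyExactAt.1 (hK q hq' hq)).of_equivariant
        ⟨Subtype.val, fun _ _ => rfl⟩ ρ
  have columns (p q : ℕ) (hq : q ≤ n) : Exact (coboundary G G (Fin (p + 1) → G ⧸ K) q)
      (coboundary G G (Fin (p + 1) → G ⧸ K) (q + 1)) :=
    exact_coboundary_of_boundedlyExactAt_subgroup (hKG q hq) (headHom G (G ⧸ K) p)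
      fun k y => funext fun i => smul_quotient_eq_self k (y i)
  have rows (p q : ℕ) (_ : q ≤ n) : Exact (coboundary G (G ⧸ K) (Fin (p + 1) → G) q)
      (coboundary G (G ⧸ K) (Fin (p + 1) → G) (q + 1)) :=
    exact_coboundary_of_equivariant
      (MulActionHom.comp ⟨QuotientGroup.mk, fun _ _ => rfl⟩ (headHom G G p)) q
  rw [hbVanishAt_iff_boundedlyExactAt, hbVanishAt_quotient_iff_boundedlyExactAt]
  exact ⟨.of_exact rows columns, .of_exact columns rows⟩

/-- if `K ⊴ G` is boundedly acyclic and `G/K` is boundedly acyclic, then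
`G` is boundedly acyclic. -/
theorem extension_boundedly_acyclic {G : Type*} [Group G] (K : Subgroup G) [K.Normal]
    (hK : ∀ q : ℕ, 0 < q → HbVanishAt K q)
    (hQ : ∀ q : ℕ, 0 < q → HbVanishAt (G ⧸ K) q) :
    ∀ q : ℕ, 0 < q → HbVanishAt G q :=
  fun q hq => (extension_boundedly_acyclic_general K fun r hr _ => hK r hr).2 (hQ q hq)
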